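/- (Multiclass VC-type inequality.) Let 𝒳 be a measurable space, K ≥ 2, and F a countable class of measurable classifiers f : 𝒳 → {1,…,K}. Let (X_1, Y_1),…,(X_n, Y_n) be i.i.d. draws from a probability measure P on 𝒳 × {1,…,K}. For f ∈ F let R(f) = P({(x,y) : f(x) ≠ y}) and R_n(f) = (1/n) Σ_{i=1}^n 1{f(X_i) ≠ Y_i}. Then for every n ≥ 1 and every ε > 0: P( sup_{f ∈ F} |R_n(f) − R(f)| > ε ) ≤ 8·S(F, n)·e^{−nε²/32}. -/

import Mathlib

/-!
Chebyshev's inequality keeps the empirical risk on an independent ghost sample close to the true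
risk with probability at least `1 / 2`, so a large deviation from the true risk forces a large
deviation between the two samples, at the cost of a factor `2`. The joint law of the two samples is
invariant under exchanging any set of paired coordinates, so arbitrary signs may be inserted into
the difference of the two loss sums, and the triangle inequality then discards the ghost sample at
the cost of another factor `2`. As this holds for every choice of signs, it holds on average over
uniform signs. Conditionally on the sample, only the finitely many loss vectors of the class matter,
at most `S(F, n)` of them, and Hoeffding's inequality for the signs with a union bound over these
vectors concludes. Removing the ghost sample before the union bound is what gives `S(F, n)` rather
than `S(F, 2n)`. When `n ε² < 2`, Chebyshev's inequality is too weak, but the claimed bound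
exceeds `1`.
-/

open MeasureTheory

noncomputable section

/-- The `n`-th (multiclass) shatter coefficient `S(F, n)`: the maximum, over points
`x_1, …, x_n`, of the number of distinct value vectors `(f(x_1), …, f(x_n))`, `f ∈ F`. -/
def shatterCoeff {X : Type*} {K : ℕ} (F : Set (X → Fin K)) (n : ℕ) : ℕ :=
  sSup {m : ℕ | ∃ xs : Fin n → X,
    m = Nat.card {v : Fin n → Fin K // ∃ f ∈ F, ∀ i, f (xs i) = v i}}

open ProbabilityTheory Finset
open scoped ENNReal NNReal

section DoubleCounting

variable {Ω Ω' : Type*} [MeasurableSpace Ω] [MeasurableSpace Ω']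

lemma mul_measure_le_measure_prod {μ : Measure Ω} {ν : Measure Ω'} [SFinite ν] {A : Set Ω}
    {B : Set (Ω × Ω')} {c : ℝ≥0∞} (hc : ∀ ω ∈ A, c ≤ ν (Prod.mk ω ⁻¹' B)) :
    c * μ A ≤ (μ.prod ν) B := by
  -- Passing to a measurable hull of `B` only enlarges its sections.
  have hB : MeasurableSet (toMeasurable (μ.prod ν) B) := measurableSet_toMeasurable _ _
  calc c * μ A
      ≤ c * μ {ω | c ≤ ν (Prod.mk ω ⁻¹' toMeasurable (μ.prod ν) B)} := by
        gcongr
        exact fun ω hω => (hc ω hω).trans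
          (measure_mono (Set.preimage_mono (subset_toMeasurable _ _)))
    _ ≤ ∫⁻ ω, ν (Prod.mk ω ⁻¹' toMeasurable (μ.prod ν) B) ∂μ :=
        mul_meas_ge_le_lintegral (measurable_measure_prodMk_left hB) c
    _ = (μ.prod ν) B := by rw [← Measure.prod_apply hB, measure_toMeasurable]

lemma le_of_forall_le_section_of_forall_section_le {μ : Measure Ω} {ν : Measure Ω'}
    [IsProbabilityMeasure μ] [IsProbabilityMeasure ν] {C : Set (Ω × Ω')} (hC : MeasurableSet C)
    {b c : ℝ≥0∞} (hc : ∀ ω, c ≤ ν (Prod.mk ω ⁻¹' C))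
    (hb : ∀ ω', μ ((fun ω => (ω, ω')) ⁻¹' C) ≤ b) : c ≤ b :=
  calc c = c * μ Set.univ := by simp
    _ ≤ (μ.prod ν) C := mul_measure_le_measure_prod fun ω _ => hc ω
    _ = ∫⁻ ω', μ ((fun ω => (ω, ω')) ⁻¹' C) ∂ν := Measure.prod_apply_symm hC
    _ ≤ ∫⁻ _, b ∂ν := lintegral_mono hb
    _ = b := by simp

end DoubleCounting

section Symmetrization

variable {Ω α : Type*} [MeasurableSpace Ω]

lemma measure_exists_lt_abs_sub_le_two_mul_prod (μ : Measure Ω) [SFinite μ] {T : α → Ω → ℝ}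
    {m : α → ℝ} {s t : ℝ} (hT : ∀ a, 1 / 2 ≤ μ {ω | |T a ω - m a| < t}) :
    μ {ω | ∃ a, s + t < |T a ω - m a|} ≤ 2 * (μ.prod μ) {w | ∃ a, s < |T a w.1 - T a w.2|} := by
  rw [← ENNReal.inv_mul_le_iff two_ne_zero ENNReal.ofNat_ne_top, ← one_div]
  refine mul_measure_le_measure_prod ?_
  rintro ω ⟨a, ha⟩
  refine (hT a).trans (measure_mono fun ω' (hω' : |T a ω' - m a| < t) => ⟨a, ?_⟩)
  have := abs_sub_le (T a ω) (T a ω') (m a)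
  linarith

lemma prod_exists_lt_abs_sub_le_two_mul (μ : Measure Ω) [IsProbabilityMeasure μ] (T : α → Ω → ℝ)
    (s : ℝ) :
    (μ.prod μ) {w | ∃ a, 2 * s < |T a w.1 - T a w.2|} ≤ 2 * μ {ω | ∃ a, s < |T a ω|} := by
  set C : Set Ω := {ω | ∃ a, s < |T a ω|}
  calc (μ.prod μ) {w | ∃ a, 2 * s < |T a w.1 - T a w.2|}
      ≤ (μ.prod μ) (Prod.fst ⁻¹' C ∪ Prod.snd ⁻¹' C) := by
        refine measure_mono ?_
        rintro w ⟨a, ha⟩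
        have := abs_sub (T a w.1) (T a w.2)
        rcases lt_or_ge s |T a w.1| with h | h
        · exact .inl ⟨a, h⟩
        · exact .inr ⟨a, by linarith⟩
    _ ≤ (μ.prod μ) (Prod.fst ⁻¹' C) + (μ.prod μ) (Prod.snd ⁻¹' C) := measure_union_le _ _
    _ ≤ μ C + μ C := add_le_add (measurePreserving_fst.measure_preimage_le C)
        (measurePreserving_snd.measure_preimage_le C)
    _ = 2 * μ C := (two_mul _).symm

end Symmetrization

section RandomSigns

/-- The sign `1` or `-1` encoded by a Boolean. Signs are indexed by `Bool` because it carries a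
discrete `σ`-algebra. -/
def boolSign (b : Bool) : ℝ := bif b then 1 else -1

lemma abs_boolSign (b : Bool) : |boolSign b| = 1 := by cases b <;> simp [boolSign]

@[fun_prop]
lemma measurable_boolSign : Measurable boolSign := .of_discrete

variable {ι : Type*} [Fintype ι]

/-- The Rademacher distribution: the law of a family of independent uniform signs. -/
def rademacher (ι : Type*) [Fintype ι] : Measure (ι → Bool) :=
  Measure.pi fun _ => (PMF.uniformOfFintype Bool).toMeasure

instance : IsProbabilityMeasure (rademacher ι) := by
  unfold rademacher
  infer_instance

lemma integral_boolSign_uniform : ∫ b, boolSign b ∂(PMF.uniformOfFintype Bool).toMeasure = 0 := by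
  simp [PMF.integral_eq_sum, boolSign]

lemma hasSubgaussianMGF_sum_boolSign_mul {v : ι → ℝ} {c : ι → ℝ≥0} (hv : ∀ i, |v i| ≤ c i) :
    HasSubgaussianMGF (fun σ => ∑ i, boolSign (σ i) * v i) (∑ i, c i ^ 2) (rademacher ι) := by
  have hindep : iIndepFun (fun i σ => boolSign (σ i) * v i) (rademacher ι) :=
    iIndepFun_pi (X := fun i b => boolSign b * v i) fun i => by fun_prop
  refine .sum_of_iIndepFun hindep fun i _ => ?_
  have hmean : ∫ σ, boolSign (σ i) * v i ∂rademacher ι = 0 := by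
    rw [integral_mul_const, rademacher, integral_comp_eval (by fun_prop),
      integral_boolSign_uniform, zero_mul]
  have hrange (σ : ι → Bool) : boolSign (σ i) * v i ∈ Set.Icc (-c i : ℝ) (c i) := by
    rw [Set.mem_Icc, ← abs_le, abs_mul, abs_boolSign, one_mul]
    exact hv i
  have hmeas : Measurable fun σ : ι → Bool => boolSign (σ i) * v i := by fun_prop
  convert hasSubgaussianMGF_of_mem_Icc_of_integral_eq_zero hmeas.aemeasurable
    (ae_of_all _ hrange) hmean
  ext
  simp [← two_mul]

lemma measureReal_le_abs_le_of_hasSubgaussianMGF {Ω : Type*} [MeasurableSpace Ω] {μ : Measure Ω}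
    {T : Ω → ℝ} {c : ℝ≥0} (hT : HasSubgaussianMGF T c μ) {t : ℝ} (ht : 0 ≤ t) :
    μ.real {ω | t ≤ |T ω|} ≤ 2 * Real.exp (-t ^ 2 / (2 * c)) := by
  have hset : {ω | t ≤ |T ω|} = {ω | t ≤ T ω} ∪ {ω | t ≤ (-T) ω} := by
    ext ω
    simp [le_abs]
  rw [hset, two_mul]
  exact (measureReal_union_le _ _).trans
    (add_le_add (hT.measure_ge_le ht) (hT.neg.measure_ge_le ht))

lemma rademacher_exists_lt_abs_sum_le {V : Set (ι → ℝ)} {N : ℕ} (hVN : V.encard ≤ N)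
    {c : ι → ℝ≥0} (hV : ∀ v ∈ V, ∀ i, |v i| ≤ c i) {t : ℝ} (ht : 0 ≤ t) :
    rademacher ι {σ | ∃ v ∈ V, t < |∑ i, boolSign (σ i) * v i|} ≤
      N * ENNReal.ofReal (2 * Real.exp (-t ^ 2 / (2 * ∑ i, (c i : ℝ) ^ 2))) := by
  have hfin : V.Finite := Set.finite_of_encard_le_coe hVN
  lift V to Finset (ι → ℝ) using hfin
  have htail (v : ι → ℝ) (hv : v ∈ V) :
      rademacher ι {σ | t < |∑ i, boolSign (σ i) * v i|} ≤
        ENNReal.ofReal (2 * Real.exp (-t ^ 2 / (2 * ∑ i, (c i : ℝ) ^ 2))) := by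
    have hHoeffding := measureReal_le_abs_le_of_hasSubgaussianMGF
      (hasSubgaussianMGF_sum_boolSign_mul (hV v hv)) ht
    push_cast at hHoeffding
    refine (measure_mono (Set.ofPred_subset_ofPred.2 fun σ => ?_)).trans
      ((ENNReal.le_ofReal_iff_toReal_le (measure_ne_top _ _) (by positivity)).2 hHoeffding)
    exact le_of_lt
  calc rademacher ι {σ | ∃ v ∈ V, t < |∑ i, boolSign (σ i) * v i|}
      = rademacher ι (⋃ v ∈ V, {σ | t < |∑ i, boolSign (σ i) * v i|}) := by
        congr 1
        ext σ
        simp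
    _ ≤ ∑ v ∈ V, rademacher ι {σ | t < |∑ i, boolSign (σ i) * v i|} :=
        measure_biUnion_finset_le _ _
    _ ≤ #V * ENNReal.ofReal (2 * Real.exp (-t ^ 2 / (2 * ∑ i, (c i : ℝ) ^ 2))) := by
        rw [← nsmul_eq_mul]
        exact sum_le_card_nsmul _ _ _ htail
    _ ≤ N * ENNReal.ofReal (2 * Real.exp (-t ^ 2 / (2 * ∑ i, (c i : ℝ) ^ 2))) := by
        gcongr
        exact_mod_cast hVN

end RandomSigns

section CoordinateSwap

variable {Z ι α : Type*} [MeasurableSpace Z] [Fintype ι] (P : Measure Z) [SigmaFinite P]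

lemma measurePreserving_swapCoordinates (σ : ι → Bool) :
    MeasurePreserving
      (fun w : (ι → Z) × (ι → Z) =>
        (fun i => bif σ i then w.1 i else w.2 i, fun i => bif σ i then w.2 i else w.1 i))
      ((Measure.pi fun _ => P).prod (Measure.pi fun _ => P))
      ((Measure.pi fun _ => P).prod (Measure.pi fun _ => P)) := by
  have hsplit := measurePreserving_arrowProdEquivProdArrow Z Z ι (fun _ => P) (fun _ => P)
  have hswap : MeasurePreserving
      (fun (w : ι → Z × Z) i => bif σ i then w i else (w i).swap)
      (Measure.pi fun _ => P.prod P) (Measure.pi fun _ => P.prod P) := by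
    refine measurePreserving_pi (fun _ => P.prod P) (fun _ => P.prod P)
      (f := fun i p => bif σ i then p else p.swap) fun i => ?_
    cases σ i
    · exact Measure.measurePreserving_swap
    · exact MeasurePreserving.id _
  convert hsplit.comp (hswap.comp hsplit.symm) using 1
  funext w
  ext i <;> cases h : σ i <;>
    simp [MeasurableEquiv.arrowProdEquivProdArrow, Equiv.arrowProdEquivProdArrow, h]

lemma prod_exists_lt_abs_sum_sub_le_boolSign (g : α → Z → ℝ) (s : ℝ) (σ : ι → Bool) :
    ((Measure.pi fun _ : ι => P).prod (Measure.pi fun _ : ι => P))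
        {w | ∃ a, s < |∑ i, g a (w.1 i) - ∑ i, g a (w.2 i)|} ≤
      ((Measure.pi fun _ : ι => P).prod (Measure.pi fun _ : ι => P))
        {w | ∃ a, s < |∑ i, boolSign (σ i) * g a (w.1 i) - ∑ i, boolSign (σ i) * g a (w.2 i)|} := by
  refine le_trans (measure_mono ?_) ((measurePreserving_swapCoordinates P σ).measure_preimage_le _)
  rintro w ⟨a, ha⟩
  refine ⟨a, ?_⟩
  convert ha using 2
  simp only [← sum_sub_distrib]
  refine sum_congr rfl fun i _ => ?_
  cases h : σ i <;> simp [boolSign]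
  ring

end CoordinateSwap

section UniformDeviation

variable {Z ι α : Type*} [MeasurableSpace Z] [Fintype ι] (P : Measure Z) [IsProbabilityMeasure P]

lemma pi_le_abs_sum_sub_le_variance_div {g : Z → ℝ} (hg : MemLp g 2 P) {t : ℝ} (ht : 0 < t) :
    (Measure.pi fun _ : ι => P) {z | t ≤ |∑ i, g (z i) - Fintype.card ι * ∫ p, g p ∂P|} ≤
      ENNReal.ofReal (Fintype.card ι * Var[g; P] / t ^ 2) := by
  have hmem (i : ι) : MemLp (fun z : ι → Z => g (z i)) 2 (Measure.pi fun _ => P) :=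
    hg.comp_measurePreserving (measurePreserving_eval (fun _ => P) i)
  have hmean : ∫ z, ∑ i, g (z i) ∂(Measure.pi fun _ : ι => P) = Fintype.card ι * ∫ p, g p ∂P := by
    rw [integral_finsetSum _ fun i _ => (hmem i).integrable one_le_two]
    simp [integral_comp_eval (μ := fun _ : ι => P) hg.aestronglyMeasurable]
  have hvar : Var[fun z => ∑ i, g (z i); Measure.pi fun _ : ι => P] =
      Fintype.card ι * Var[g; P] := by
    simpa [sum_fn] using variance_sum_pi (X := fun _ : ι => g) fun _ => hg
  rw [← hmean, ← hvar]
  exact meas_ge_le_variance_div_sq (memLp_finsetSum _ fun i _ => hmem i) ht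

lemma half_le_pi_abs_sum_sub_lt {g : Z → ℝ} (hg : AEMeasurable g P)
    (hg01 : ∀ᵐ p ∂P, g p ∈ Set.Icc (0 : ℝ) 1) {t : ℝ} (ht : 0 < t)
    (hcard : Fintype.card ι ≤ 2 * t ^ 2) :
    1 / 2 ≤ (Measure.pi fun _ : ι => P)
      {z | |∑ i, g (z i) - Fintype.card ι * ∫ p, g p ∂P| < t} := by
  set μ := Measure.pi fun _ : ι => P
  set A : Set (ι → Z) := {z | |∑ i, g (z i) - Fintype.card ι * ∫ p, g p ∂P| < t}
  have hcompl : μ Aᶜ ≤ 1 / 2 := by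
    have hvar : Var[g; P] ≤ 1 / 4 := (variance_le_sq_of_bounded hg01 hg).trans (by norm_num)
    have hratio : Fintype.card ι * Var[g; P] / t ^ 2 ≤ 1 / 2 := by
      rw [div_le_iff₀ (by positivity)]
      nlinarith
    calc μ Aᶜ = μ {z | t ≤ |∑ i, g (z i) - Fintype.card ι * ∫ p, g p ∂P|} := by
          simp [A, Set.compl_def]
      _ ≤ ENNReal.ofReal (Fintype.card ι * Var[g; P] / t ^ 2) :=
          pi_le_abs_sum_sub_le_variance_div P
            (memLp_of_bounded hg01 hg.aestronglyMeasurable 2) ht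
      _ ≤ ENNReal.ofReal (1 / 2) := ENNReal.ofReal_le_ofReal hratio
      _ = 1 / 2 := by simp
  have hone : 1 ≤ μ A + μ Aᶜ := by
    simpa using measure_union_le (μ := μ) A Aᶜ
  calc (1 / 2 : ℝ≥0∞) = 1 - 1 / 2 := by simp
    _ ≤ 1 - μ Aᶜ := tsub_le_tsub_left hcompl 1
    _ ≤ μ A := tsub_le_iff_right.2 hone

variable {g : α → Z → ℝ}

lemma pi_exists_lt_abs_sum_sub_le_four_mul_boolSign (hg : ∀ a, AEMeasurable (g a) P)
    (hg01 : ∀ a, ∀ᵐ p ∂P, g a p ∈ Set.Icc (0 : ℝ) 1) {t : ℝ} (ht : 0 < t)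
    (hcard : 2 * Fintype.card ι ≤ t ^ 2) (σ : ι → Bool) :
    (Measure.pi fun _ : ι => P) {z | ∃ a, t < |∑ i, g a (z i) - Fintype.card ι * ∫ p, g a p ∂P|} ≤
      4 * (Measure.pi fun _ : ι => P) {z | ∃ a, t / 4 < |∑ i, boolSign (σ i) * g a (z i)|} := by
  set μ := Measure.pi fun _ : ι => P
  calc μ {z | ∃ a, t < |∑ i, g a (z i) - Fintype.card ι * ∫ p, g a p ∂P|}
      ≤ 2 * (μ.prod μ) {w | ∃ a, t / 2 < |∑ i, g a (w.1 i) - ∑ i, g a (w.2 i)|} := by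
        simpa only [add_halves] using measure_exists_lt_abs_sub_le_two_mul_prod μ (s := t / 2)
          fun a => half_le_pi_abs_sum_sub_lt P (hg a) (hg01 a) (half_pos ht) (by linarith)
    _ ≤ 2 * (μ.prod μ) {w | ∃ a, 2 * (t / 4) <
          |∑ i, boolSign (σ i) * g a (w.1 i) - ∑ i, boolSign (σ i) * g a (w.2 i)|} := by
        rw [show 2 * (t / 4) = t / 2 by ring]
        exact mul_le_mul_right (prod_exists_lt_abs_sum_sub_le_boolSign P g (t / 2) σ) 2
    _ ≤ 2 * (2 * μ {z | ∃ a, t / 4 < |∑ i, boolSign (σ i) * g a (z i)|}) := by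
        gcongr
        exact prod_exists_lt_abs_sub_le_two_mul μ
          (fun a (z : ι → Z) => ∑ i, boolSign (σ i) * g a (z i)) (t / 4)
    _ = 4 * μ {z | ∃ a, t / 4 < |∑ i, boolSign (σ i) * g a (z i)|} := by
        rw [← mul_assoc]
        norm_num

variable [Countable α]

lemma measurableSet_exists_lt_abs_sum_boolSign (hg : ∀ a, Measurable (g a)) (s : ℝ) :
    MeasurableSet {q : (ι → Bool) × (ι → Z) | ∃ a, s < |∑ i, boolSign (q.1 i) * g a (q.2 i)|} := by
  rw [Set.ofPred_exists]
  exact .iUnion fun a => measurableSet_lt measurable_const (by fun_prop)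

lemma pi_exists_lt_abs_sum_sub_le_of_two_mul_card_le (hg : ∀ a, Measurable (g a))
    (hg01 : ∀ a p, g a p ∈ Set.Icc (0 : ℝ) 1) {N : ℕ}
    (hN : ∀ z : ι → Z, (Set.range fun a i => g a (z i)).encard ≤ N) {t : ℝ} (ht : 0 < t)
    (hcard : 2 * Fintype.card ι ≤ t ^ 2) :
    (Measure.pi fun _ : ι => P) {z | ∃ a, t < |∑ i, g a (z i) - Fintype.card ι * ∫ p, g a p ∂P|} ≤
      N * ENNReal.ofReal (8 * Real.exp (-t ^ 2 / (32 * Fintype.card ι))) := by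
  set μ := Measure.pi fun _ : ι => P
  set M := μ {z | ∃ a, t < |∑ i, g a (z i) - Fintype.card ι * ∫ p, g a p ∂P|}
  set b := ENNReal.ofReal (2 * Real.exp (-t ^ 2 / (32 * Fintype.card ι))) with hb
  have hsigns (σ : ι → Bool) :
      4⁻¹ * M ≤ μ {z | ∃ a, t / 4 < |∑ i, boolSign (σ i) * g a (z i)|} :=
    (ENNReal.inv_mul_le_iff four_ne_zero ENNReal.ofNat_ne_top).2 <|
      pi_exists_lt_abs_sum_sub_le_four_mul_boolSign P (fun a => (hg a).aemeasurable)
        (fun a => ae_of_all P (hg01 a)) ht hcard σ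
  have hsample (z : ι → Z) :
      rademacher ι {σ | ∃ a, t / 4 < |∑ i, boolSign (σ i) * g a (z i)|} ≤ N * b := by
    have hbound : ∀ v ∈ Set.range fun a i => g a (z i), ∀ i, |v i| ≤ ((1 : ℝ≥0) : ℝ) := by
      rintro _ ⟨a, rfl⟩ i
      simpa [abs_of_nonneg (hg01 a (z i)).1] using (hg01 a (z i)).2
    convert rademacher_exists_lt_abs_sum_le (hN z) hbound (t := t / 4) (by positivity) using 1
    · simp
    · simp only [hb, NNReal.coe_one, one_pow, sum_const, card_univ, nsmul_eq_mul, mul_one]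
      congr 4
      ring
  have haverage : 4⁻¹ * M ≤ N * b :=
    le_of_forall_le_section_of_forall_section_le
      (measurableSet_exists_lt_abs_sum_boolSign hg (t / 4)) hsigns hsample
  calc M ≤ 4 * (N * b) :=
        (ENNReal.inv_mul_le_iff four_ne_zero ENNReal.ofNat_ne_top).1 haverage
    _ = N * (ENNReal.ofReal 4 * b) := by
        rw [mul_left_comm, ENNReal.ofReal_ofNat]
    _ = N * ENNReal.ofReal (8 * Real.exp (-t ^ 2 / (32 * Fintype.card ι))) := by
        rw [hb, ← ENNReal.ofReal_mul (by norm_num), ← mul_assoc]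
        norm_num

theorem pi_exists_lt_abs_sum_sub_le (hg : ∀ a, Measurable (g a))
    (hg01 : ∀ a p, g a p ∈ Set.Icc (0 : ℝ) 1) {N : ℕ}
    (hN : ∀ z : ι → Z, (Set.range fun a i => g a (z i)).encard ≤ N) {t : ℝ} (ht : 0 ≤ t) :
    (Measure.pi fun _ : ι => P) {z | ∃ a, t < |∑ i, g a (z i) - Fintype.card ι * ∫ p, g a p ∂P|} ≤
      N * ENNReal.ofReal (8 * Real.exp (-t ^ 2 / (32 * Fintype.card ι))) := by
  rcases isEmpty_or_nonempty α with hα | hα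
  · simp
  rcases lt_or_ge (2 * Fintype.card ι : ℝ) (t ^ 2) with hlarge | hsmall
  · have ht_ne : t ≠ 0 := by
      rintro rfl
      norm_num at hlarge
      linarith [(Fintype.card ι).cast_nonneg (α := ℝ)]
    exact pi_exists_lt_abs_sum_sub_le_of_two_mul_card_le P hg hg01 hN (ht.lt_of_ne' ht_ne) hlarge.le
  · have hN_one : 1 ≤ N := by
      obtain ⟨p⟩ := nonempty_of_isProbabilityMeasure P
      have := (Set.one_le_encard_iff_nonempty.2 (Set.range_nonempty _)).trans (hN fun _ => p)
      exact_mod_cast this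
    have hexp : 1 ≤ 8 * Real.exp (-t ^ 2 / (32 * Fintype.card ι)) := by
      have hratio : t ^ 2 / (32 * Fintype.card ι) ≤ 1 / 16 :=
        div_le_of_le_mul₀ (by positivity) (by norm_num) (by linarith)
      have := Real.add_one_le_exp (-t ^ 2 / (32 * Fintype.card ι))
      rw [neg_div] at this ⊢
      linarith
    refine prob_le_one.trans (one_le_mul ?_ ?_)
    · exact_mod_cast hN_one
    · exact ENNReal.one_le_ofReal.2 hexp

end UniformDeviation

section ZeroOneLoss

variable {X Y : Type*}

/-- The loss `1` on the examples `(x, y)` that the classifier `f` gets wrong and `0` on the others,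
so that the risk of `f` is its integral and the empirical risk its sample mean. -/
def zeroOneLoss (f : X → Y) : X × Y → ℝ :=
  {p | f p.1 ≠ p.2}.indicator 1

lemma zeroOneLoss_mem_Icc (f : X → Y) (p : X × Y) : zeroOneLoss f p ∈ Set.Icc (0 : ℝ) 1 := by
  by_cases h : f p.1 = p.2 <;> simp [zeroOneLoss, h]

lemma sum_zeroOneLoss {ι : Type*} [Fintype ι] [DecidableEq Y] (f : X → Y) (z : ι → X × Y) :
    ∑ i, zeroOneLoss f (z i) = #{i | f (z i).1 ≠ (z i).2} := by
  simp only [zeroOneLoss, Set.indicator_apply, Set.mem_ofPred_eq, Pi.one_apply, sum_boole]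

variable [MeasurableSpace X] [MeasurableSpace Y] [MeasurableEq Y]

lemma measurableSet_misclassified {f : X → Y} (hf : Measurable f) :
    MeasurableSet {p : X × Y | f p.1 ≠ p.2} :=
  (measurableSet_eq_fun (hf.comp measurable_fst) measurable_snd).compl

lemma measurable_zeroOneLoss {f : X → Y} (hf : Measurable f) : Measurable (zeroOneLoss f) :=
  measurable_one.indicator (measurableSet_misclassified hf)

lemma integral_zeroOneLoss {f : X → Y} (hf : Measurable f) (P : Measure (X × Y)) :
    ∫ p, zeroOneLoss f p ∂P = P.real {p | f p.1 ≠ p.2} :=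
  integral_indicator_one (measurableSet_misclassified hf)

end ZeroOneLoss

section ShatterCoeff

variable {X : Type*} {K n : ℕ}

lemma card_trace_le_shatterCoeff (F : Set (X → Fin K)) (xs : Fin n → X) :
    Nat.card {v : Fin n → Fin K // ∃ f ∈ F, ∀ i, f (xs i) = v i} ≤ shatterCoeff F n := by
  refine le_csSup ⟨Nat.card (Fin n → Fin K), ?_⟩ ⟨xs, rfl⟩
  rintro _ ⟨_, rfl⟩
  exact Finite.card_subtype_le _

lemma encard_range_zeroOneLoss_le_shatterCoeff (F : Set (X → Fin K)) (z : Fin n → X × Fin K) :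
    (Set.range fun (f : F) i => zeroOneLoss f.1 (z i)).encard ≤ shatterCoeff F n := by
  set trace : Set (Fin n → Fin K) := {v | ∃ f ∈ F, ∀ i, f (z i).1 = v i}
  have hrange : (Set.range fun (f : F) i => zeroOneLoss f.1 (z i)) ⊆
      (fun v i => zeroOneLoss (fun _ => v i) (z i)) '' trace := by
    rintro _ ⟨f, rfl⟩
    exact ⟨fun i => f.1 (z i).1, ⟨f.1, f.2, fun _ => rfl⟩, rfl⟩
  calc (Set.range fun (f : F) i => zeroOneLoss f.1 (z i)).encard
      ≤ trace.encard := (Set.encard_le_encard hrange).trans (Set.encard_image_le _ _)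
    _ = Nat.card trace := by
        rw [Nat.card_coe_set_eq, trace.toFinite.cast_ncard_eq]
    _ ≤ shatterCoeff F n := by
        exact_mod_cast card_trace_le_shatterCoeff F fun i => (z i).1

end ShatterCoeff

lemma lt_abs_div_sub_iff {r ε a b : ℝ} (hr : 0 < r) : ε < |a / r - b| ↔ r * ε < |a - r * b| := by
  have hscale : a - r * b = r * (a / r - b) := by field_simp
  rw [hscale, abs_mul, abs_of_pos hr, mul_lt_mul_iff_right₀ hr]

/-- Multiclass VC-type inequality: for a countable class `F` of measurable classifiers
and an i.i.d. sample of size `n ≥ 1` from `P`,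
`P(sup_{f ∈ F} |R_n(f) - R(f)| > ε) ≤ 8 S(F, n) e^{-nε²/32}`. -/
theorem multiclass_vc_inequality
    {X : Type*} [MeasurableSpace X] (K n : ℕ) (hK : 2 ≤ K) (hn : 1 ≤ n)
    (F : Set (X → Fin K)) (hFc : F.Countable) (hFm : ∀ f ∈ F, Measurable f)
    (P : Measure (X × Fin K)) [IsProbabilityMeasure P]
    (ε : ℝ) (hε : 0 < ε) :
    ((Measure.pi fun _ : Fin n => P)
        {z | ∃ f ∈ F,
          ε < |((Finset.univ.filter fun i => f (z i).1 ≠ (z i).2).card : ℝ) / n -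
                (P {p : X × Fin K | f p.1 ≠ p.2}).toReal|}).toReal ≤
      8 * (shatterCoeff F n : ℝ) * Real.exp (-((n : ℝ) * ε ^ 2) / 32) := by
  have : Countable F := hFc.to_subtype
  have hn_pos : (0 : ℝ) < n := by exact_mod_cast hn
  have hdeviation := pi_exists_lt_abs_sum_sub_le (ι := Fin n) P
    (fun f : F => measurable_zeroOneLoss (hFm f.1 f.2)) (fun f => zeroOneLoss_mem_Icc f.1)
    (encard_range_zeroOneLoss_le_shatterCoeff F) (t := n * ε) (by positivity)
  refine (ENNReal.toReal_mono (by finiteness) ((measure_mono ?_).trans hdeviation)).trans_eq ?_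
  · rintro z ⟨f, hf, hz⟩
    refine ⟨⟨f, hf⟩, ?_⟩
    rw [sum_zeroOneLoss, integral_zeroOneLoss (hFm f hf), Fintype.card_fin]
    exact (lt_abs_div_sub_iff hn_pos).1 hz
  · have hexponent : -(n * ε) ^ 2 / (32 * n) = -(n * ε ^ 2) / 32 := by field_simp
    rw [ENNReal.toReal_mul, ENNReal.toReal_natCast, ENNReal.toReal_ofReal (by positivity),
      Fintype.card_fin, hexponent]
    ring
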